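/- Let β be a shape function of the form β(r) = ∫₀^r u dν(u) for some probability distribution ν on (0,∞). Let U, V be nonnegative real random variables with P(U ≤ u) ≤ u for all u ∈ [0,1]. Then for any constant c > 0, E[ 1{U ≤ c·β(V)} / V ] ≤ c. -/

import Mathlib

open MeasureTheory

/-!
For `V > 0` write `1 / V = ∫_V^∞ v⁻² dv`. Since `β` is monotone, `U ≤ c β(V)` forces `U ≤ c β(v)`
for all `v > V`, so by Tonelli the expectation is at most
`∫₀^∞ v⁻² P(U ≤ c β(v)) dv ≤ c ∫₀^∞ v⁻² β(v) dv`. Applying Tonelli once more, now to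
`β(v) = ∫_{u ≤ v} u dν(u)`, turns the last integral into `∫ u · u⁻¹ dν(u)`, the mass of `ν` on
`(0, ∞)`.
-/

theorem lintegral_Ioi_ofReal_rpow_neg_two {a : ℝ} (ha : 0 < a) :
    ∫⁻ v in Set.Ioi a, ENNReal.ofReal (v ^ (-2 : ℝ)) = ENNReal.ofReal a⁻¹ := by
  have hnonneg : 0 ≤ᵐ[volume.restrict (Set.Ioi a)] fun v : ℝ => v ^ (-2 : ℝ) := by
    filter_upwards [ae_restrict_mem measurableSet_Ioi] with v hv
    exact Real.rpow_nonneg (ha.trans hv).le _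
  rw [← ofReal_integral_eq_lintegral_ofReal (integrableOn_Ioi_rpow_of_lt (by norm_num) ha) hnonneg,
    integral_Ioi_rpow_of_lt (by norm_num) ha]
  norm_num [Real.rpow_neg_one]

/-- The shape function `β(r) = ∫₀^r u dν(u)` of a measure `ν` on the line. Only the part of `ν` on
`(0, ∞)` matters, and the value is `0` for `r ≤ 0`. -/
noncomputable def shapeFunction (ν : Measure ℝ) (r : ℝ) : ℝ :=
  ∫ u in Set.Ioc (0 : ℝ) r, u ∂ν

namespace shapeFunction

theorem nonneg (ν : Measure ℝ) (r : ℝ) : 0 ≤ shapeFunction ν r :=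
  setIntegral_nonneg measurableSet_Ioc fun _ hu => hu.1.le

variable (ν : Measure ℝ) [IsLocallyFiniteMeasure ν]

theorem monotone : Monotone (shapeFunction ν) := by
  intro r s hrs
  refine setIntegral_mono_set continuous_id'.integrableOn_Ioc ?_
    (Set.Ioc_subset_Ioc_right hrs).eventuallyLE
  filter_upwards [ae_restrict_mem measurableSet_Ioc] with u hu
  exact hu.1.le

theorem ofReal_eq_lintegral (r : ℝ) :
    ENNReal.ofReal (shapeFunction ν r) =
      ∫⁻ u in Set.Ioi (0 : ℝ), (Set.Iic r).indicator ENNReal.ofReal u ∂ν := by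
  have hnonneg : 0 ≤ᵐ[ν.restrict (Set.Ioc 0 r)] fun u : ℝ => u := by
    filter_upwards [ae_restrict_mem measurableSet_Ioc] with u hu
    exact hu.1.le
  rw [shapeFunction,
    ofReal_integral_eq_lintegral_ofReal continuous_id'.integrableOn_Ioc hnonneg,
    setLIntegral_indicator measurableSet_Iic, Set.Iic_inter_Ioi]

end shapeFunction

theorem lintegral_rpow_neg_two_mul_indicator_Iic {u : ℝ} (hu : 0 < u) :
    ∫⁻ v in Set.Ioi (0 : ℝ),
      ENNReal.ofReal (v ^ (-2 : ℝ)) * (Set.Iic v).indicator ENNReal.ofReal u = 1 := by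
  have hindicator (v : ℝ) :
      ENNReal.ofReal (v ^ (-2 : ℝ)) * (Set.Iic v).indicator ENNReal.ofReal u =
        (Set.Ici u).indicator (fun v => ENNReal.ofReal (v ^ (-2 : ℝ)) * ENNReal.ofReal u) v := by
    by_cases huv : u ≤ v <;> simp [huv]
  calc
    _ = ∫⁻ v in Set.Ioi u, ENNReal.ofReal (v ^ (-2 : ℝ)) * ENNReal.ofReal u := by
      simp only [hindicator]
      rw [setLIntegral_indicator measurableSet_Ici,
        Set.inter_eq_left.mpr (Set.Ici_subset_Ioi.mpr hu), setLIntegral_congr Ioi_ae_eq_Ici]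
    _ = ENNReal.ofReal u⁻¹ * ENNReal.ofReal u := by
      rw [lintegral_mul_const _ (by fun_prop), lintegral_Ioi_ofReal_rpow_neg_two hu]
    _ = 1 := by
      rw [← ENNReal.ofReal_mul (inv_nonneg.mpr hu.le), inv_mul_cancel₀ hu.ne', ENNReal.ofReal_one]

theorem lintegral_rpow_neg_two_mul_shapeFunction (ν : Measure ℝ) [IsLocallyFiniteMeasure ν] :
    ∫⁻ v in Set.Ioi (0 : ℝ), ENNReal.ofReal (v ^ (-2 : ℝ)) * ENNReal.ofReal (shapeFunction ν v) =
      ν (Set.Ioi 0) := by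
  have hmeas : Measurable fun p : ℝ × ℝ =>
      ENNReal.ofReal (p.1 ^ (-2 : ℝ)) * (Set.Iic p.1).indicator ENNReal.ofReal p.2 :=
    Measurable.mul (by fun_prop) <| Measurable.ite
      (measurableSet_le measurable_snd measurable_fst) (by fun_prop) measurable_const
  calc
    _ = ∫⁻ v in Set.Ioi (0 : ℝ), ∫⁻ u in Set.Ioi (0 : ℝ),
          ENNReal.ofReal (v ^ (-2 : ℝ)) * (Set.Iic v).indicator ENNReal.ofReal u ∂ν := by
      refine lintegral_congr fun v => ?_
      rw [shapeFunction.ofReal_eq_lintegral, lintegral_const_mul' _ _ ENNReal.ofReal_ne_top]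
    _ = ∫⁻ u in Set.Ioi (0 : ℝ), ∫⁻ v in Set.Ioi (0 : ℝ),
          ENNReal.ofReal (v ^ (-2 : ℝ)) * (Set.Iic v).indicator ENNReal.ofReal u ∂volume ∂ν :=
      lintegral_lintegral_swap hmeas.aemeasurable
    _ = ∫⁻ _ in Set.Ioi (0 : ℝ), 1 ∂ν :=
      setLIntegral_congr_fun measurableSet_Ioi fun _ => lintegral_rpow_neg_two_mul_indicator_Iic
    _ = ν (Set.Ioi 0) := setLIntegral_one _

theorem ofReal_ite_le_div_le_lintegral {b : ℝ → ℝ} (hb : Monotone b) (u : ℝ) {v : ℝ} (hv : 0 ≤ v) :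
    ENNReal.ofReal ((if u ≤ b v then 1 else 0) / v) ≤
      ∫⁻ w in Set.Ioi (0 : ℝ), if u ≤ b w then ENNReal.ofReal (w ^ (-2 : ℝ)) else 0 := by
  by_cases huv : u ≤ b v
  · rcases hv.eq_or_lt with rfl | hpos
    -- The left-hand side vanishes here because `1 / 0 = 0`.
    · simp only [div_zero, ENNReal.ofReal_zero, zero_le]
    calc
      _ = ∫⁻ w in Set.Ioi v, ENNReal.ofReal (w ^ (-2 : ℝ)) := by
        rw [if_pos huv, one_div, lintegral_Ioi_ofReal_rpow_neg_two hpos]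
      _ = ∫⁻ w in Set.Ioi v, if u ≤ b w then ENNReal.ofReal (w ^ (-2 : ℝ)) else 0 :=
        setLIntegral_congr_fun measurableSet_Ioi fun w hw =>
          (if_pos (huv.trans (hb (Set.mem_Ioi.mp hw).le))).symm
      _ ≤ _ := lintegral_mono_set (Set.Ioi_subset_Ioi hv)
  · simp [huv]

section Superuniform

variable {Ω : Type*} [MeasurableSpace Ω] {μ : Measure Ω} {U V : Ω → ℝ}

theorem lintegral_ite_le_div_le [SFinite μ] (hU : AEMeasurable U μ) (hV : ∀ ω, 0 ≤ V ω)
    {b : ℝ → ℝ} (hb : Monotone b) :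
    ∫⁻ ω, ENNReal.ofReal ((if U ω ≤ b (V ω) then 1 else 0) / V ω) ∂μ ≤
      ∫⁻ v in Set.Ioi (0 : ℝ), ENNReal.ofReal (v ^ (-2 : ℝ)) * μ {ω | U ω ≤ b v} := by
  have hmeas : AEMeasurable
      (fun p : Ω × ℝ => if U p.1 ≤ b p.2 then ENNReal.ofReal (p.2 ^ (-2 : ℝ)) else 0)
      (μ.prod (volume.restrict (Set.Ioi 0))) :=
    AEMeasurable.indicator₀ (by fun_prop) <|
      nullMeasurableSet_le hU.comp_fst (hb.measurable.comp measurable_snd).aemeasurable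
  calc
    _ ≤ ∫⁻ ω, ∫⁻ v in Set.Ioi (0 : ℝ),
          if U ω ≤ b v then ENNReal.ofReal (v ^ (-2 : ℝ)) else 0 ∂volume ∂μ :=
      lintegral_mono fun ω => ofReal_ite_le_div_le_lintegral hb (U ω) (hV ω)
    _ = ∫⁻ v in Set.Ioi (0 : ℝ), ∫⁻ ω,
          if U ω ≤ b v then ENNReal.ofReal (v ^ (-2 : ℝ)) else 0 ∂μ :=
      lintegral_lintegral_swap hmeas
    _ = _ := lintegral_congr fun v =>
      lintegral_indicator_const₀ (nullMeasurableSet_le hU aemeasurable_const) _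

theorem measure_le_ofReal_of_forall_mem_Icc [IsProbabilityMeasure μ]
    (hU : ∀ u ∈ Set.Icc (0 : ℝ) 1, μ {ω | U ω ≤ u} ≤ ENNReal.ofReal u) {u : ℝ} (hu : 0 ≤ u) :
    μ {ω | U ω ≤ u} ≤ ENNReal.ofReal u := by
  rcases le_total u 1 with hu_le | hu_ge
  · exact hU u ⟨hu, hu_le⟩
  · exact prob_le_one.trans (ENNReal.one_le_ofReal.mpr hu_ge)

theorem stmt2_general [SFinite μ] (ν : Measure ℝ) [IsLocallyFiniteMeasure ν]
    (hU : AEMeasurable U μ) (hV : ∀ ω, 0 ≤ V ω)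
    (hunif : ∀ u, 0 ≤ u → μ {ω | U ω ≤ u} ≤ ENNReal.ofReal u) {c : ℝ} (hc : 0 ≤ c) :
    ∫⁻ ω, ENNReal.ofReal ((if U ω ≤ c * shapeFunction ν (V ω) then 1 else 0) / V ω) ∂μ ≤
      ENNReal.ofReal c * ν (Set.Ioi 0) := by
  calc
    _ ≤ ∫⁻ v in Set.Ioi (0 : ℝ),
          ENNReal.ofReal (v ^ (-2 : ℝ)) * μ {ω | U ω ≤ c * shapeFunction ν v} :=
      lintegral_ite_le_div_le hU hV ((shapeFunction.monotone ν).const_mul hc)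
    _ ≤ ∫⁻ v in Set.Ioi (0 : ℝ),
          ENNReal.ofReal (v ^ (-2 : ℝ)) * ENNReal.ofReal (c * shapeFunction ν v) := by
      gcongr with v
      exact hunif _ (mul_nonneg hc (shapeFunction.nonneg ν v))
    _ = ENNReal.ofReal c * ∫⁻ v in Set.Ioi (0 : ℝ),
          ENNReal.ofReal (v ^ (-2 : ℝ)) * ENNReal.ofReal (shapeFunction ν v) := by
      simp only [ENNReal.ofReal_mul hc, mul_left_comm _ (ENNReal.ofReal c)]
      exact lintegral_const_mul' _ _ ENNReal.ofReal_ne_top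
    _ = ENNReal.ofReal c * ν (Set.Ioi 0) := by
      rw [lintegral_rpow_neg_two_mul_shapeFunction]

end Superuniform

/-- Lemma: for a shape function `β(r) = ∫₀^r u dν(u)` with `ν` a probability
measure on `(0,∞)`, and `U` stochastically lower bounded by uniform,
`E[ 1{U ≤ c β(V)} / V ] ≤ c` for any nonnegative random variable `V`. -/
theorem stmt2 {Ω : Type*} [MeasurableSpace Ω] (μ : Measure Ω) [IsProbabilityMeasure μ]
    (ν : Measure ℝ) [IsProbabilityMeasure ν] (hν : ν (Set.Ioi (0 : ℝ))ᶜ = 0)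
    (β : ℝ → ℝ) (hβ : ∀ r, β r = ∫ u in Set.Ioc (0 : ℝ) r, u ∂ν)
    (U V : Ω → ℝ) (hU : Measurable U) (hV : Measurable V)
    (hUnn : ∀ ω, 0 ≤ U ω) (hVnn : ∀ ω, 0 ≤ V ω)
    (hunif : ∀ u ∈ Set.Icc (0 : ℝ) 1, μ {ω | U ω ≤ u} ≤ ENNReal.ofReal u)
    (c : ℝ) (hc : 0 < c) :
    ∫⁻ ω, ENNReal.ofReal ((if U ω ≤ c * β (V ω) then (1 : ℝ) else 0) / V ω) ∂μ
      ≤ ENNReal.ofReal c := by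
  obtain rfl : β = shapeFunction ν := funext hβ
  exact (stmt2_general ν hU.aemeasurable hVnn
    (fun _ => measure_le_ofReal_of_forall_mem_Icc hunif) hc.le).trans
    (mul_le_of_le_one_right' prob_le_one)
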